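/- Let d ∈ {1, 2, 7, 11, 19, 43, 67, 163} and K = ℚ(√−d). Then every quadratic extension L/K which is unramified at every prime ideal of O_K not dividing 3 is K-isomorphic to K(√−3) = K(ζ₃), the field obtained by adjoining to K a root of x² + 3. -/

import Mathlib

open NumberField Polynomial

theorem eis {K L : Type} [Field K] [NumberField K] [Field L] [Algebra K L] [NumberField L]
    (p : 𝓞 K) (hp : Prime p) 
    (hunr : ∀ Q : Ideal (𝓞 L), Q.IsPrime → Q.comap (algebraMap (𝓞 K) (𝓞 L)) = Ideal.span {p} →
        Ideal.ramificationIdx' (Ideal.span {p}) Q = 1)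
    (t n : 𝓞 K) (ht : p ∣ t) (hn : p ∣ n) (hn2 : ¬ p * p ∣ n)
    (α : L) (hα : α ^ 2 = algebraMap K L t * α + algebraMap K L n) : False := by
  have hIntegral : IsIntegral (𝓞 K) α := by
    refine ⟨X ^ 2 - C t * X - C n, by monicity!, ?_⟩
    simp only [eval₂_sub, eval₂_mul, eval₂_pow, eval₂_X, eval₂_C]
    rw [IsScalarTower.algebraMap_apply (𝓞 K) K L, IsScalarTower.algebraMap_apply (𝓞 K) K L, hα]
    ring
  have hIntegralZ : IsIntegral ℤ α := isIntegral_trans (R := ℤ) (A := 𝓞 K) α hIntegral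
  let β : 𝓞 L := ⟨α, hIntegralZ⟩
  have hβ : β ^ 2 = algebraMap (𝓞 K) (𝓞 L) t * β + algebraMap (𝓞 K) (𝓞 L) n := by
    apply RingOfIntegers.ext
    exact hα
  have hP : (Ideal.span {p}).IsPrime := (Ideal.span_singleton_prime hp.ne_zero).2 hp
  have : Algebra.IsIntegral (𝓞 K) (𝓞 L) := inferInstance
  obtain ⟨Q, -, hQ, hQP⟩ := Ideal.exists_ideal_over_prime_of_isIntegral (S := 𝓞 L) (Ideal.span {p}) (⊥) (by
    rw [Ideal.comap_bot_of_injective _ (FaithfulSMul.algebraMap_injective _ _)]; exact bot_le)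
  have e1 := hunr Q hQ hQP
  obtain ⟨m, rfl⟩ := hn
  obtain ⟨u, rfl⟩ := ht
  have hm : ¬ p ∣ m := fun h => hn2 (mul_dvd_mul_left p h)
  have hpQ : algebraMap (𝓞 K) (𝓞 L) p ∈ Q := by
    rw [← Ideal.mem_comap, hQP]; exact Ideal.mem_span_singleton_self p
  have hβQ : β ∈ Q := by
    apply hQ.mem_of_pow_mem 2
    rw [hβ, map_mul, map_mul]
    exact Q.add_mem (Q.mul_mem_right _ (Q.mul_mem_right _ hpQ)) (Q.mul_mem_right _ hpQ)
  have hmQ : algebraMap (𝓞 K) (𝓞 L) m ∉ Q := by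
    rw [← Ideal.mem_comap, hQP, Ideal.mem_span_singleton]; exact hm
  have hpm : algebraMap (𝓞 K) (𝓞 L) p * algebraMap (𝓞 K) (𝓞 L) m ∈ Q ^ 2 := by
    have : algebraMap (𝓞 K) (𝓞 L) p * algebraMap (𝓞 K) (𝓞 L) m
      = β * β - algebraMap (𝓞 K) (𝓞 L) p * (β * algebraMap (𝓞 K) (𝓞 L) u) := by
      have := hβ
      rw [map_mul, map_mul] at this
      linear_combination -this
    rw [this, pow_two, ← mul_assoc]
    exact Ideal.sub_mem _ (Ideal.mul_mem_mul hβQ hβQ)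
      (Ideal.mul_mem_right _ _ (Ideal.mul_mem_mul hpQ hβQ))
  have hp2 : algebraMap (𝓞 K) (𝓞 L) p ∈ Q ^ 2 := by
    rcases Ideal.IsPrime.mem_pow_mul Q hpm with h | h
    · exact h
    · exact absurd h hmQ
  have hle : Ideal.map (algebraMap (𝓞 K) (𝓞 L)) (Ideal.span {p}) ≤ Q ^ 2 := by
    rw [Ideal.map_span, Set.image_singleton, Ideal.span_singleton_le_iff_mem]; exact hp2
  exact (Ideal.ramificationIdx'_ne_one_iff (hle.trans (Ideal.pow_le_self two_ne_zero))).2 hle e1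
theorem iso_of_sqrt {K L : Type} [Field K] [Field L] [Algebra K L] (hdeg : Module.finrank K L = 2)
    (ρ : L) (hρ : ρ ^ 2 = -3) (hn : ∀ z : K, algebraMap K L z ≠ ρ) :
    Nonempty (L ≃ₐ[K] AdjoinRoot ((X : K[X]) ^ 2 + 3)) := by
  have hmon : ((X : K[X]) ^ 2 + 3).Monic := by
    rw [show (3 : K[X]) = C 3 from rfl]; monicity!
  have hnd : ((X : K[X]) ^ 2 + 3).natDegree = 2 := by
    rw [show (3 : K[X]) = C 3 from rfl]; compute_degree!
  have hirr : Irreducible ((X : K[X]) ^ 2 + 3) := by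
    rw [hmon.irreducible_iff_roots_eq_zero_of_degree_le_three (by omega) (by omega),
      Multiset.eq_zero_iff_forall_notMem]
    intro z hz
    have hz' : z ^ 2 + 3 = 0 := by
      have := (mem_roots hmon.ne_zero).1 hz
      simpa [IsRoot] using this
    have h1 : (algebraMap K L z) ^ 2 = -3 := by
      rw [← map_pow, show z ^ 2 = -3 by linear_combination hz', map_neg, map_ofNat]
    rcases sq_eq_sq_iff_eq_or_eq_neg.1 (h1.trans hρ.symm) with h | h
    · exact hn z h
    · exact hn (-z) (by rw [map_neg, h, neg_neg])
  haveI := Fact.mk hirr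
  have hfin : FiniteDimensional K L := Module.finite_of_finrank_pos (by omega)
  haveI : Module.Finite K (AdjoinRoot ((X : K[X]) ^ 2 + 3)) := hmon.finite_adjoinRoot
  let f : AdjoinRoot ((X : K[X]) ^ 2 + 3) →ₐ[K] L :=
    AdjoinRoot.liftAlgHom _ (Algebra.ofId K L) ρ (by simp [hρ])
  have hfr : Module.finrank K (AdjoinRoot ((X : K[X]) ^ 2 + 3)) = 2 := by
    rw [(AdjoinRoot.powerBasis hmon.ne_zero).finrank, AdjoinRoot.powerBasis_dim, hnd]
  have hinj : Function.Injective f := f.toRingHom.injective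
  have hsurj : Function.Surjective f :=
    (LinearMap.injective_iff_surjective_of_finrank_eq_finrank (f := f.toLinearMap)
      (by rw [hfr, hdeg])).1 hinj
  exact ⟨(AlgEquiv.ofBijective f ⟨hinj, hsurj⟩).symm⟩

theorem exists_sqrt {K L : Type} [Field K] [NumberField K] [Field L] [Algebra K L]
    (hdeg : Module.finrank K L = 2) :
    ∃ (x : 𝓞 K) (r : L), r ^ 2 = algebraMap K L x ∧ ∀ z : K, algebraMap K L z ≠ r := by
  have hfin : FiniteDimensional K L := Module.finite_of_finrank_pos (by omega)
  obtain ⟨z, hz⟩ : ∃ z : L, ∀ y : K, algebraMap K L y ≠ z := by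
    by_contra! h
    have : Module.finrank K L = 1 := by
      rw [finrank_eq_one_iff']
      refine ⟨1, one_ne_zero, fun w => ?_⟩
      obtain ⟨y, hy⟩ := h w
      exact ⟨y, by rw [Algebra.smul_def, mul_one, hy]⟩
    omega
  have hrel : ∃ a b : K, z ^ 2 = algebraMap K L a + algebraMap K L b * z := by
    have hli : LinearIndependent K ![(1 : L), z] := by
      rw [LinearIndependent.pair_iff]
      intro a b hab
      rw [Algebra.smul_def, Algebra.smul_def, mul_one] at hab
      have hb : b = 0 := by
        by_contra hb
        apply hz (-a / b)
        have : algebraMap K L b ≠ 0 := by simpa using hb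
        rw [map_div₀, map_neg, div_eq_iff this]
        linear_combination -hab
      subst hb
      simpa using hab
    have hsp := hli.span_eq_top_of_card_eq_finrank' (by simp [hdeg])
    have hm : z ^ 2 ∈ Submodule.span K (Set.range ![(1 : L), z]) := by rw [hsp]; trivial
    simp only [Matrix.range_cons, Matrix.range_empty, Set.union_empty] at hm
    rw [Set.singleton_union, Submodule.mem_span_pair] at hm
    obtain ⟨a, b, h⟩ := hm
    refine ⟨a, b, ?_⟩
    rw [← h, Algebra.smul_def, Algebra.smul_def, mul_one]
  obtain ⟨a, b, hab⟩ := hrel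
  obtain ⟨n, m, hm, hnm⟩ := IsFractionRing.div_surjective (A := 𝓞 K) (4 * a + b ^ 2)
  have hm0 : (m : K) ≠ 0 := by
    simpa using nonZeroDivisors.ne_zero hm
  have h2 : (2 : K) ≠ 0 := two_ne_zero
  refine ⟨n * m, algebraMap K L m * (2 * z - algebraMap K L b), ?_, ?_⟩
  · have h1 : (m : K) ^ 2 * (4 * a + b ^ 2) = ((n * m : 𝓞 K) : K) := by
      rw [← hnm]; push_cast; 
      change _ ^ 2 * ((n : K) / (m : K)) = _
      field_simp
    rw [← h1]
    simp only [map_mul, map_pow, map_add, map_ofNat]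
    linear_combination 4 * (algebraMap K L m) ^ 2 * hab
  · intro y hy
    apply hz ((y / m + b) / 2)
    have : algebraMap K L m ≠ 0 := by simpa using hm0
    have h2' : algebraMap K L 2 ≠ 0 := by simpa using h2
    rw [map_div₀, map_add, map_div₀, hy, div_eq_iff h2', mul_div_cancel_left₀ _ this]
    rw [map_ofNat]; ring

theorem exists_sqrt_squarefree {K L : Type} [Field K] [NumberField K] [Field L] [Algebra K L]
    [IsPrincipalIdealRing (𝓞 K)]
    (hdeg : Module.finrank K L = 2) :
    ∃ (x : 𝓞 K) (r : L), x ≠ 0 ∧ Squarefree x ∧ r ^ 2 = algebraMap K L x ∧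
      ∀ z : K, algebraMap K L z ≠ r := by
  let S : Set (𝓞 K) := {x | ∃ r : L, r ^ 2 = algebraMap K L x ∧ ∀ z : K, algebraMap K L z ≠ r}
  have hS : S.Nonempty := by
    obtain ⟨x, r, h⟩ := exists_sqrt hdeg
    exact ⟨x, r, h⟩
  obtain ⟨x, ⟨r, hr, hr'⟩, hmin⟩ := (IsWellFounded.wf : WellFounded (DvdNotUnit (α := 𝓞 K))).has_min S hS
  have hx : x ≠ 0 := by
    rintro rfl
    have : r = 0 := by simpa using hr
    exact hr' 0 (by simp [this])
  refine ⟨x, r, hx, ?_, hr, hr'⟩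
  rintro y ⟨w, rfl⟩
  by_contra hy
  have hy0 : y ≠ 0 := by rintro rfl; simp at hx
  have hw0 : w ≠ 0 := by rintro rfl; simp at hx
  have hy1 : algebraMap K L (y : K) ≠ 0 := by simpa using hy0
  refine hmin w ⟨r / algebraMap K L y, ?_, ?_⟩ ⟨hw0, y * y, ?_, mul_comm _ _⟩
  · rw [div_pow, hr, div_eq_iff (pow_ne_zero _ hy1)]
    push_cast
    ring
  · intro z hz
    apply hr' (z * y)
    rw [map_mul, hz, div_mul_cancel₀ _ hy1]
  · intro h; exact hy (isUnit_of_mul_isUnit_left h)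

theorem dvd_of_sqf {R : Type} [CommRing R] [IsDomain R] [UniqueFactorizationMonoid R]
    (x y : R) (hx : Squarefree x) (hx0 : x ≠ 0) (hy : y ≠ 0) (h : ∀ p, Prime p → p ∣ x → p ∣ y) : x ∣ y := by
  classical
  letI : StrongNormalizationMonoid R := UniqueFactorizationMonoid.strongNormalizationMonoid
  rw [UniqueFactorizationMonoid.dvd_iff_normalizedFactors_le_normalizedFactors hx0 hy]
  rw [Multiset.le_iff_subset ((UniqueFactorizationMonoid.squarefree_iff_nodup_normalizedFactors hx0).1 hx)]
  intro p hp
  have h1 := UniqueFactorizationMonoid.prime_of_normalized_factor p hp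
  rw [UniqueFactorizationMonoid.mem_normalizedFactors_iff' hy]
  refine ⟨h1.irreducible, UniqueFactorizationMonoid.normalize_normalized_factor p hp,
    h p h1 (UniqueFactorizationMonoid.dvd_of_mem_normalizedFactors hp)⟩
theorem trace_two {R A : Type} [CommRing R] [CommRing A] [Algebra R A] (b : Module.Basis (Fin 2) R A)
    (h0 : b 0 = 1) (t n : R) (h1 : b 1 * b 1 = algebraMap R A t * b 1 - algebraMap R A n) :
    Algebra.trace R A (b 1) = t := by
  rw [Algebra.trace_eq_matrix_trace b, Matrix.trace_fin_two, Algebra.leftMulMatrix_eq_repr_mul,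
    Algebra.leftMulMatrix_eq_repr_mul, h1, h0]
  have e : algebraMap R A t * b 1 - algebraMap R A n = t • b 1 - n • b 0 := by
    rw [h0, Algebra.smul_def, Algebra.smul_def, mul_one]
  rw [e]
  simp

theorem discr_two {A : Type} [CommRing A] (b : Module.Basis (Fin 2) ℤ A)
    (h0 : b 0 = 1) (t n : ℤ) (h1 : b 1 * b 1 = t * b 1 - n) :
    Algebra.discr ℤ b = t ^ 2 - 4 * n := by
  have ht : Algebra.trace ℤ A (b 1) = t := trace_two b h0 t n (by simpa using h1)
  have h1' : b 1 * b 1 = t • b 1 - n • (1 : A) := by rw [h1]; simp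
  have hone : Algebra.trace ℤ A 1 = 2 := by
    rw [Algebra.trace_eq_matrix_trace b]; simp
  rw [Algebra.discr_def, Matrix.det_fin_two]
  simp only [Algebra.traceMatrix_apply, Algebra.traceForm_apply, h0, one_mul, mul_one, h1', ht,
    map_sub, map_smul, hone, smul_eq_mul]
  ring

/-- every element of the quadratic field is `p + q s`. -/
theorem exists_rat {K : Type} [Field K] [NumberField K] (d : ℕ) (hd : 0 < d)
    (s : K) (hs : s ^ 2 = -(d : K)) (hK : Module.finrank ℚ K = 2) :
    (∀ x : K, ∃ p q : ℚ, x = p + q * s ∧ Algebra.trace ℚ K x = 2 * p) ∧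
      (∀ p q : ℚ, (p : K) + q * s = 0 → p = 0 ∧ q = 0) := by
  have hns : ∀ q : ℚ, (q : K) ≠ s := by
    intro q hq
    rw [← hq] at hs
    have : q ^ 2 = -(d : ℚ) := by exact_mod_cast hs
    have hd' : (0 : ℚ) < d := by exact_mod_cast hd
    nlinarith [sq_nonneg q]
  have hinj : ∀ p q : ℚ, (p : K) + q * s = 0 → p = 0 ∧ q = 0 := by
    intro p q h
    have hq : q = 0 := by
      by_contra hq
      apply hns (-p / q)
      have : (q : K) ≠ 0 := by exact_mod_cast hq
      push_cast
      rw [div_eq_iff this]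
      linear_combination -h
    subst hq
    simpa using h
  refine ⟨?_, hinj⟩
  have hli : LinearIndependent ℚ ![(1 : K), s] := by
    rw [LinearIndependent.pair_iff]
    intro a b hab
    apply hinj
    rw [Algebra.smul_def, Algebra.smul_def, mul_one] at hab
    simpa using hab
  let b := basisOfLinearIndependentOfCardEqFinrank hli (by simp [hK])
  have hb0 : b 0 = 1 := by simp [b]
  have hb1 : b 1 = s := by simp [b]
  have htr : Algebra.trace ℚ K s = 0 := by
    rw [← hb1]
    refine trace_two b hb0 0 d ?_
    rw [hb1, ← pow_two, hs]; simp
  have hone : Algebra.trace ℚ K 1 = 2 := by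
    rw [Algebra.trace_eq_matrix_trace b]; simp
  intro x
  refine ⟨b.repr x 0, b.repr x 1, ?_, ?_⟩
  · conv_lhs => rw [← b.sum_repr x]
    rw [Fin.sum_univ_two, hb0, hb1, Algebra.smul_def, Algebra.smul_def, mul_one]
    simp
  · conv_lhs => rw [← b.sum_repr x]
    rw [Fin.sum_univ_two, hb0, hb1, map_add, map_smul, map_smul, hone, htr]
    simp [mul_comm]

theorem rat_int_of_sq (d : ℕ) (hd : Squarefree d) (q : ℚ) (m : ℤ) (h : (d : ℚ) * q ^ 2 = m) :
    ∃ k : ℤ, q = k := by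
  have hden : (q.den : ℚ) ≠ 0 := by exact_mod_cast q.den_ne_zero
  have h1 : (d : ℤ) * q.num ^ 2 = m * q.den ^ 2 := by
    have : (d : ℚ) * q.num ^ 2 = m * q.den ^ 2 := by
      rw [← h]
      nth_rewrite 2 [← Rat.num_div_den q]
      field_simp
    exact_mod_cast this
  have h2 : (q.den : ℤ) ^ 2 ∣ d := by
    have hc : IsCoprime ((q.den : ℤ) ^ 2) (q.num ^ 2) := by
      apply IsCoprime.pow
      rw [Int.isCoprime_iff_nat_coprime]
      simpa using q.reduced.symm
    exact hc.dvd_of_dvd_mul_right ⟨m, by rw [h1]; ring⟩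
  have h3 : q.den * q.den ∣ d := by
    rw [← pow_two]; exact_mod_cast h2
  have h4 := Nat.isUnit_iff.1 (hd _ h3)
  exact ⟨q.num, ((Rat.den_eq_one_iff q).1 h4).symm⟩

/-- half-integral coordinates of the integers -/
theorem exists_half {K : Type} [Field K] [NumberField K] (d : ℕ) (hd : 0 < d) (hsq : Squarefree d)
    (s : K) (hs : s ^ 2 = -(d : K)) (hK : Module.finrank ℚ K = 2) (x : 𝓞 K) :
    ∃ A B N : ℤ, 2 * (x : K) = A + B * s ∧ A ^ 2 + d * B ^ 2 = 4 * N := by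
  obtain ⟨p, q, hx, htr⟩ := (exists_rat d hd s hs hK).1 x
  have hxi : IsIntegral ℤ (x : K) := x.isIntegral_coe
  have h1 : IsIntegral ℤ (Algebra.trace ℚ K (x : K)) := Algebra.isIntegral_trace hxi
  obtain ⟨A, hA⟩ := IsIntegrallyClosed.isIntegral_iff.1 h1
  have hA' : (A : ℚ) = 2 * p := by rw [← htr]; simpa using hA
  have hIntegral : IsIntegral ℤ ((x : K) * (A - x)) := hxi.mul ((isIntegral_intCast A).sub hxi)
  have e : (x : K) * (A - x) = algebraMap ℚ K (p ^ 2 + d * q ^ 2) := by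
    have : (A : K) = 2 * p := by exact_mod_cast congrArg (fun y : ℚ => (y : K)) hA'
    rw [this, hx]
    simp only [eq_ratCast]
    push_cast
    linear_combination -(q : K) ^ 2 * hs
  rw [e, isIntegral_algebraMap_iff (algebraMap ℚ K).injective] at hIntegral
  obtain ⟨N, hN⟩ := IsIntegrallyClosed.isIntegral_iff.1 hIntegral
  have hN' : (N : ℚ) = p ^ 2 + d * q ^ 2 := by simpa using hN
  obtain ⟨B, hB⟩ := rat_int_of_sq d hsq (2 * q) (4 * N - A ^ 2) (by
    push_cast
    rw [hA', hN']; ring)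
  refine ⟨A, B, N, ?_, ?_⟩
  · have h3 : (A : K) = 2 * p := by exact_mod_cast congrArg (fun y : ℚ => (y : K)) hA'
    have h4 : (2 * q : K) = B := by exact_mod_cast congrArg (fun y : ℚ => (y : K)) hB
    rw [h3, ← h4, hx]; ring
  · have : (A : ℚ) ^ 2 + d * B ^ 2 = 4 * N := by rw [hA', ← hB, hN']; ring
    exact_mod_cast this

/-- the arithmetic data of the quadratic ring -/
def QuadData (K : Type) [Field K] [NumberField K] (ω : 𝓞 K) (t n : ℤ) : Prop :=
  ω * ω = t * ω - n ∧ (∀ x : 𝓞 K, ∃ a b : ℤ, x = a + b * ω) ∧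
    ∀ a b : ℤ, (a : 𝓞 K) + b * ω = 0 → a = 0 ∧ b = 0

theorem quadData_even {K : Type} [Field K] [NumberField K] (d : ℕ) (hd : 0 < d) (hsq : Squarefree d)
    (s : K) (hs : s ^ 2 = -(d : K)) (hK : Module.finrank ℚ K = 2) (h4 : d % 4 = 1 ∨ d % 4 = 2) :
    ∃ ω : 𝓞 K, QuadData K ω 0 d := by
  have hIntegral : IsIntegral ℤ s := by
    refine ⟨X ^ 2 + C (d : ℤ), by monicity!, ?_⟩
    simp [hs]
  obtain ⟨ω, hω⟩ : ∃ ω : 𝓞 K, algebraMap (𝓞 K) K ω = s := ⟨⟨s, hIntegral⟩, rfl⟩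
  refine ⟨ω, ?_, ?_, ?_⟩
  · apply FaithfulSMul.algebraMap_injective (𝓞 K) K
    simp only [map_sub, map_mul, map_intCast, hω]
    push_cast
    linear_combination hs
  · intro x
    obtain ⟨A, B, N, hx, hN⟩ := exists_half d hd hsq s hs hK x
    have hm : A % 4 = 0 ∧ B % 4 = 0 ∨ A % 4 = 0 ∧ B % 4 = 2 ∨ A % 4 = 2 ∧ B % 4 = 0 ∨
        A % 4 = 2 ∧ B % 4 = 2 := by
      have e := congrArg (fun z : ℤ => z % 4) hN
      simp only [pow_two] at e
      have hA : A % 4 = 0 ∨ A % 4 = 1 ∨ A % 4 = 2 ∨ A % 4 = 3 := by omega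
      have hB : B % 4 = 0 ∨ B % 4 = 1 ∨ B % 4 = 2 ∨ B % 4 = 3 := by omega
      have hd4 : (d : ℤ) % 4 = 1 ∨ (d : ℤ) % 4 = 2 := by omega
      rcases hA with hA | hA | hA | hA <;> rcases hB with hB | hB | hB | hB <;>
        rcases hd4 with hd4 | hd4 <;>
        simp [Int.add_emod, Int.mul_emod, hA, hB, hd4] at e ⊢
    obtain ⟨a, rfl⟩ : ∃ a, A = 2 * a := ⟨A / 2, by omega⟩
    obtain ⟨b, rfl⟩ : ∃ b, B = 2 * b := ⟨B / 2, by omega⟩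
    refine ⟨a, b, ?_⟩
    apply FaithfulSMul.algebraMap_injective (𝓞 K) K
    push_cast at hx
    simp only [map_add, map_mul, map_intCast, hω]
    have h2 : (2 : K) ≠ 0 := two_ne_zero
    apply mul_left_cancel₀ h2
    rw [hx]; ring
  · intro a b h
    have h' : (a : K) + b * s = 0 := by
      have := congrArg (algebraMap (𝓞 K) K) h
      simpa only [map_add, map_mul, map_intCast, hω, map_zero] using this
    have := (exists_rat d hd s hs hK).2 a b (by exact_mod_cast h')
    exact_mod_cast this

theorem quadData_odd {K : Type} [Field K] [NumberField K] (d : ℕ) (hd : 0 < d) (hsq : Squarefree d)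
    (s : K) (hs : s ^ 2 = -(d : K)) (hK : Module.finrank ℚ K = 2) (n : ℤ) (h4 : (d : ℤ) + 1 = 4 * n) :
    ∃ ω : 𝓞 K, QuadData K ω 1 n := by
  have h2 : (2 : K) ≠ 0 := two_ne_zero
  have h4' : (d : K) + 1 = 4 * n := by exact_mod_cast congrArg (fun z : ℤ => (z : K)) h4
  have hs' : ((1 + s) / 2) ^ 2 = (1 + s) / 2 - n := by
    field_simp
    linear_combination hs - h4'
  have hIntegral : IsIntegral ℤ ((1 + s) / 2) := by
    refine ⟨X ^ 2 - X + C n, by monicity!, ?_⟩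
    rw [eval₂_add, eval₂_sub, eval₂_pow, eval₂_X, eval₂_C, hs']
    simp
  obtain ⟨ω, hω⟩ : ∃ ω : 𝓞 K, algebraMap (𝓞 K) K ω = (1 + s) / 2 := ⟨⟨(1 + s) / 2, hIntegral⟩, rfl⟩
  refine ⟨ω, ?_, ?_, ?_⟩
  · apply FaithfulSMul.algebraMap_injective (𝓞 K) K
    simp only [map_sub, map_mul, map_intCast, hω]
    push_cast
    linear_combination hs'
  · intro x
    obtain ⟨A, B, N, hx, hN⟩ := exists_half d hd hsq s hs hK x
    have hm : (A - B) % 2 = 0 := by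
      have hd' : (d : ℤ) = 4 * n - 1 := by omega
      rw [hd'] at hN
      have e : (A - B) * (A + B) = 4 * (N - n * B ^ 2) := by linear_combination hN
      have : Even ((A - B) * (A + B)) := by rw [e]; exact ⟨2 * (N - n * B ^ 2), by ring⟩
      rcases Int.even_mul.1 this with h | h
      · exact Int.even_iff.1 h
      · have := Int.even_iff.1 h; omega
    obtain ⟨a, ha⟩ : ∃ a, A = 2 * a + B := ⟨(A - B) / 2, by omega⟩
    subst ha
    refine ⟨a, B, ?_⟩
    apply FaithfulSMul.algebraMap_injective (𝓞 K) K
    push_cast at hx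
    simp only [map_add, map_mul, map_intCast, hω]
    apply mul_left_cancel₀ h2
    rw [hx]; field_simp; ring
  · intro a b h
    have h' : (a : K) + b * ((1 + s) / 2) = 0 := by
      have := congrArg (algebraMap (𝓞 K) K) h
      simpa only [map_add, map_mul, map_intCast, hω, map_zero] using this
    have h3 := (exists_rat d hd s hs hK).2 (2 * a + b) b (by
      push_cast; field_simp at h'; linear_combination h')
    have h5 : b = 0 := by exact_mod_cast h3.2
    subst h5
    simpa using h3.1

theorem pid_of_quadData {K : Type} [Field K] [NumberField K] (ω : 𝓞 K) (t n : ℤ)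
    (hq : QuadData K ω t n) (D : ℕ) (hD0 : 0 < D) (hD : t ^ 2 - 4 * n = -(D : ℤ))
    (hchk : ∀ p : ℕ, p.Prime → 9 * p ^ 2 ≤ 4 * D → ∀ a : ℤ, ¬ (p : ℤ) ∣ a ^ 2 + t * a + n) :
    IsPrincipalIdealRing (𝓞 K) := by
  obtain ⟨hω, hspan, hinj⟩ := hq
  have hli : LinearIndependent ℤ ![(1 : 𝓞 K), ω] := by
    rw [LinearIndependent.pair_iff]
    intro a b hab
    apply hinj
    simpa using hab
  have hsp : ⊤ ≤ Submodule.span ℤ (Set.range ![(1 : 𝓞 K), ω]) := by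
    intro x _
    simp only [Matrix.range_cons, Matrix.range_empty, Set.union_empty]
    rw [Set.singleton_union, Submodule.mem_span_pair]
    obtain ⟨a, b, h⟩ := hspan x
    exact ⟨a, b, by rw [h]; simp⟩
  let b := Module.Basis.mk hli hsp
  have hb0 : b 0 = 1 := by simp [b]
  have hb1 : b 1 = ω := by simp [b]
  have hdisc : discr K = -(D : ℤ) := by
    rw [← discr_eq_discr K b, discr_two b hb0 t n (by rw [hb1, hω]), hD]
  have hK : Module.finrank ℚ K = 2 := by
    rw [← RingOfIntegers.rank, Module.finrank_eq_card_basis b]; simp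
  have hreal : InfinitePlace.nrRealPlaces K = 0 := by
    classical
    unfold InfinitePlace.nrRealPlaces
    refine Fintype.card_eq_zero_iff.2 ?_
    refine ⟨fun ⟨v, hv⟩ => ?_⟩
    let f := InfinitePlace.embedding_of_isReal hv
    let y : ℝ := f (algebraMap (𝓞 K) K ω)
    have hy : y * y = t * y - n := by
      have := congrArg (fun z => f (algebraMap (𝓞 K) K z)) hω
      simpa using this
    have hD' : (t : ℝ) ^ 2 - 4 * n = -(D : ℝ) := by exact_mod_cast congrArg (fun z : ℤ => (z : ℝ)) hD
    have : (0 : ℝ) < D := by exact_mod_cast hD0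
    nlinarith [sq_nonneg (2 * y - t)]
  have hcx : InfinitePlace.nrComplexPlaces K = 1 := by
    have := InfinitePlace.card_add_two_mul_card_eq_rank K
    omega
  apply RingOfIntegers.isPrincipalIdealRing_of_isPrincipal_of_pow_le_of_mem_primesOver_of_mem_Icc
  rw [hcx, hK, hdisc]
  intro p hpM hp P hP _
  have hpb : 9 * p ^ 2 ≤ 4 * D := by
    have h1 := (Finset.mem_Icc.1 hpM).2
    have h2 := (Nat.le_floor_iff' hp.ne_zero).1 h1
    have h3 : (p : ℝ) ≤ 2 / 3 * √D := by
      refine h2.trans ?_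
      have : |((-(D : ℤ) : ℤ) : ℝ)| = D := by simp
      rw [this]
      have hpi : 4 / Real.pi ≤ 4 / 3 := by
        apply div_le_div_of_nonneg_left <;> linarith [Real.pi_gt_three]
      have hsq := Real.sqrt_nonneg (D : ℝ)
      norm_num [Nat.factorial]
      nlinarith
    have h4 : (p : ℝ) ^ 2 ≤ (2 / 3 * √D) ^ 2 := by gcongr
    rw [mul_pow, Real.sq_sqrt (by positivity)] at h4
    have h5 : (9 : ℝ) * p ^ 2 ≤ 4 * D := by linarith
    exact_mod_cast h5
  obtain ⟨hPp, hPl⟩ := hP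
  have hmem : ∀ k : ℤ, (k : 𝓞 K) ∈ P ↔ (p : ℤ) ∣ k := by
    intro k
    rw [← Ideal.mem_span_singleton, hPl.over, Ideal.under_def, Ideal.mem_comap]
    simp
  have hpP : ((p : ℤ) : 𝓞 K) ∈ P := (hmem p).2 dvd_rfl
  have hpz : Prime (p : ℤ) := Nat.prime_iff_prime_int.1 hp
  refine ⟨⟨((p : ℤ) : 𝓞 K), le_antisymm (fun x hx => ?_) ?_⟩⟩
  · obtain ⟨a, c, rfl⟩ := hspan x
    have hc : (p : ℤ) ∣ c := by
      by_contra hc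
      have hcop : IsCoprime (p : ℤ) c := (hpz.coprime_iff_not_dvd).2 hc
      obtain ⟨u, v, huv⟩ := hcop
      have h1 : ((v * a : ℤ) : 𝓞 K) + ω ∈ P := by
        have : ((v * a : ℤ) : 𝓞 K) + ω = v * (a + c * ω) + ((p : ℤ) : 𝓞 K) * (u * ω) := by
          have e := congrArg (fun z : ℤ => (z : 𝓞 K)) huv
          push_cast at e ⊢
          linear_combination -ω * e
        rw [this]
        exact P.add_mem (P.mul_mem_left _ hx) (P.mul_mem_right _ hpP)
      refine hchk p hp hpb (v * a) ((hmem _).1 ?_)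
      have : (((v * a) ^ 2 + t * (v * a) + n : ℤ) : 𝓞 K)
          = (((v * a : ℤ) : 𝓞 K) + ω) * (((v * a : ℤ) : 𝓞 K) + t - ω) := by
        push_cast
        linear_combination hω
      rw [this]
      exact P.mul_mem_right _ h1
    have ha : (p : ℤ) ∣ a := by
      rw [← hmem]
      have := P.sub_mem hx (P.mul_mem_right ω ((hmem c).2 hc))
      simpa using this
    obtain ⟨a', rfl⟩ := ha
    obtain ⟨c', rfl⟩ := hc
    rw [Ideal.submodule_span_eq, Ideal.mem_span_singleton]
    exact ⟨a' + c' * ω, by push_cast; ring⟩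
  · rw [Ideal.submodule_span_eq, Ideal.span_singleton_le_iff_mem]; exact hpP

theorem QuadData.coord {K : Type} [Field K] [NumberField K] {ω : 𝓞 K} {t n : ℤ}
    (hq : QuadData K ω t n) {a b c e : ℤ} (h : (a : 𝓞 K) + b * ω = c + e * ω) : a = c ∧ b = e := by
  have := hq.2.2 (a - c) (b - e) (by push_cast; linear_combination h)
  omega

theorem QuadData.mul {K : Type} [Field K] [NumberField K] {ω : 𝓞 K} {t n : ℤ}
    (hq : QuadData K ω t n) (a b c e : ℤ) : ((a : 𝓞 K) + b * ω) * (c + e * ω) =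
      ((a * c - n * b * e : ℤ) : 𝓞 K) + ((a * e + b * c + t * b * e : ℤ) : 𝓞 K) * ω := by
  have := hq.1
  push_cast
  linear_combination (b * e : 𝓞 K) * this

theorem QuadData.mul_coord {K : Type} [Field K] [NumberField K] {ω : 𝓞 K} {t n : ℤ}
    (hq : QuadData K ω t n) {a b c e f g : ℤ}
    (h : ((a : 𝓞 K) + b * ω) * (c + e * ω) = f + g * ω) :
    a * c - n * b * e = f ∧ a * e + b * c + t * b * e = g := by
  rw [hq.mul] at h
  exact hq.coord h

theorem QuadData.norm {K : Type} [Field K] [NumberField K] {ω : 𝓞 K} {t n : ℤ}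
    (hq : QuadData K ω t n) {a b c e f g : ℤ}
    (h : ((a : 𝓞 K) + b * ω) * (c + e * ω) = f + g * ω) :
    (a ^ 2 + t * a * b + n * b ^ 2) * (c ^ 2 + t * c * e + n * e ^ 2) =
      f ^ 2 + t * f * g + n * g ^ 2 := by
  obtain ⟨rfl, rfl⟩ := hq.mul_coord h
  ring

theorem QuadData.isUnit {K : Type} [Field K] [NumberField K] {ω : 𝓞 K} {t n : ℤ}
    (hq : QuadData K ω t n) {a b : ℤ} (h : (a ^ 2 + t * a * b + n * b ^ 2).natAbs = 1) :
    IsUnit ((a : 𝓞 K) + b * ω) := by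
  have hm : ((a : 𝓞 K) + b * ω) * (((a + t * b : ℤ) : 𝓞 K) + ((-b : ℤ) : 𝓞 K) * ω) =
      ((a ^ 2 + t * a * b + n * b ^ 2 : ℤ) : 𝓞 K) := by
    rw [hq.mul]
    push_cast
    ring
  have hu : IsUnit ((a ^ 2 + t * a * b + n * b ^ 2 : ℤ) : 𝓞 K) :=
    (Int.isUnit_iff_natAbs_eq.2 h).map (Int.castRingHom (𝓞 K))
  rw [← hm] at hu
  exact isUnit_of_mul_isUnit_left hu

theorem QuadData.norm_unit {K : Type} [Field K] [NumberField K] {ω : 𝓞 K} {t n : ℤ}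
    (hq : QuadData K ω t n) {a b : ℤ} (h : IsUnit ((a : 𝓞 K) + b * ω)) :
    (a ^ 2 + t * a * b + n * b ^ 2).natAbs = 1 := by
  obtain ⟨y, hy⟩ := h.exists_right_inv
  obtain ⟨c, e, rfl⟩ := hq.2.1 y
  have := hq.norm (f := 1) (g := 0) (by rw [hy]; simp)
  have h1 : IsUnit (a ^ 2 + t * a * b + n * b ^ 2) :=
    isUnit_of_mul_isUnit_left (y := c ^ 2 + t * c * e + n * e ^ 2) (by rw [this]; norm_num)
  exact Int.isUnit_iff_natAbs_eq.1 h1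

theorem QuadData.prime_of_norm_two {K : Type} [Field K] [NumberField K]
    [IsPrincipalIdealRing (𝓞 K)] {ω : 𝓞 K} {t n : ℤ}
    (hq : QuadData K ω t n) {a b : ℤ} (h : a ^ 2 + t * a * b + n * b ^ 2 = 2) :
    Prime ((a : 𝓞 K) + b * ω) := by
  refine Irreducible.prime ⟨fun hu => ?_, ?_⟩
  · have := hq.norm_unit hu
    omega
  · intro x y hxy
    obtain ⟨c, e, rfl⟩ := hq.2.1 x
    obtain ⟨f, g, rfl⟩ := hq.2.1 y
    have h1 := hq.norm hxy.symm
    rw [h] at h1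
    have h2 := congrArg Int.natAbs h1
    rw [Int.natAbs_mul] at h2
    have hpr : Nat.Prime ((c ^ 2 + t * c * e + n * e ^ 2).natAbs *
        (f ^ 2 + t * f * g + n * g ^ 2).natAbs) := by rw [h2]; exact Nat.prime_two
    rcases Nat.prime_mul_iff.1 hpr with h3 | h3
    · exact Or.inr (hq.isUnit h3.2)
    · exact Or.inl (hq.isUnit h3.2)

theorem QuadData.prime_two {K : Type} [Field K] [NumberField K]
    [IsPrincipalIdealRing (𝓞 K)] {ω : 𝓞 K} {n : ℤ}
    (hq : QuadData K ω 1 n) (hn : n % 2 = 1) : Prime (2 : 𝓞 K) := by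
  have e2 : (2 : 𝓞 K) = ((2 : ℤ) : 𝓞 K) + ((0 : ℤ) : 𝓞 K) * ω := by simp
  have key : ∀ a b : ℤ, (a ^ 2 + 1 * a * b + n * b ^ 2).natAbs ≠ 2 := by
    intro a b h
    have hA : a % 2 = 0 ∧ b % 2 = 0 := by
      have h1 : (a ^ 2 + 1 * a * b + n * b ^ 2) % 2 = 0 := by omega
      have ha : a % 2 = 0 ∨ a % 2 = 1 := by omega
      have hb : b % 2 = 0 ∨ b % 2 = 1 := by omega
      rcases ha with ha | ha <;> rcases hb with hb | hb <;>
        simp [pow_two, Int.add_emod, Int.mul_emod, ha, hb, hn] at h1 ⊢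
    obtain ⟨c, rfl⟩ : ∃ c, a = 2 * c := ⟨a / 2, by omega⟩
    obtain ⟨e, rfl⟩ : ∃ e, b = 2 * e := ⟨b / 2, by omega⟩
    have : (2 * c) ^ 2 + 1 * (2 * c) * (2 * e) + n * (2 * e) ^ 2 = 4 * (c ^ 2 + c * e + n * e ^ 2) := by
      ring
    rw [this] at h
    omega
  refine Irreducible.prime ⟨fun hu => ?_, ?_⟩
  · rw [e2] at hu
    have := hq.norm_unit hu
    norm_num at this
  · intro x y hxy
    rw [e2] at hxy
    obtain ⟨c, e, rfl⟩ := hq.2.1 x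
    obtain ⟨f, g, rfl⟩ := hq.2.1 y
    have h1 := hq.norm hxy.symm
    have h2 := congrArg Int.natAbs h1
    rw [Int.natAbs_mul] at h2
    norm_num only at h2
    have k1 := key c e
    have k2 := key f g
    generalize hX : (c ^ 2 + 1 * c * e + n * e ^ 2).natAbs = X at *
    generalize hY : (f ^ 2 + 1 * f * g + n * g ^ 2).natAbs = Y at *
    have hXd : X ∣ 4 := ⟨Y, by simpa using h2.symm⟩
    have hX4 : X ≤ 4 := Nat.le_of_dvd (by norm_num) hXd
    interval_cases X
    · omega
    · exact Or.inl (hq.isUnit hX)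
    · omega
    · omega
    · exact Or.inr (hq.isUnit (by rw [hY]; omega))

/-- The unramifiedness hypothesis. -/
def Unr (K L : Type) [Field K] [NumberField K] [Field L] [Algebra K L] [NumberField L] : Prop :=
  ∀ P : Ideal (𝓞 K), P.IsPrime → P ≠ ⊥ → (3 : 𝓞 K) ∉ P →
      ∀ Q : Ideal (𝓞 L), Q.IsPrime → Q.comap (algebraMap (𝓞 K) (𝓞 L)) = P →
        Ideal.ramificationIdx' P Q = 1

theorem eis_unr {K L : Type} [Field K] [NumberField K] [Field L] [Algebra K L] [NumberField L]
    (hunr : Unr K L) (p : 𝓞 K) (hp : Prime p) (hp3 : ¬ p ∣ 3)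
    (t n : 𝓞 K) (ht : p ∣ t) (hn : p ∣ n) (hn2 : ¬ p * p ∣ n)
    (α : L) (hα : α ^ 2 = algebraMap K L t * α + algebraMap K L n) : False := by
  refine eis p hp (hunr _ ((Ideal.span_singleton_prime hp.ne_zero).2 hp) ?_ ?_) t n ht hn hn2 α hα
  · rw [Ne, Ideal.span_singleton_eq_bot]; exact hp.ne_zero
  · rw [Ideal.mem_span_singleton]; exact hp3

theorem not_dvd_three {R : Type} [CommRing R] {p : R} (hp : Prime p) (h2 : p ∣ 2) : ¬ p ∣ 3 := by
  intro h3
  apply hp.not_isUnit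
  apply isUnit_of_dvd_one
  have := dvd_sub h3 h2
  norm_num at this
  exact this

theorem kill {K L : Type} [Field K] [NumberField K] [Field L] [Algebra K L] [NumberField L]
    (hunr : Unr K L) (p : 𝓞 K) (hp : Prime p) (hp2 : p ∣ 2) (x : 𝓞 K) (r : L)
    (hr : r ^ 2 = algebraMap K L x) (c : 𝓞 K) (h1 : p ∣ x - c * c) (h2 : ¬ p * p ∣ x - c * c) :
    False := by
  refine eis_unr hunr p hp (not_dvd_three hp hp2) (2 * c) (x - c * c) (hp2.mul_right c) h1 h2
    (r + algebraMap K L c) ?_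
  change _ = algebraMap K L (algebraMap (𝓞 K) K _) * _ + algebraMap K L (algebraMap (𝓞 K) K _)
  change r ^ 2 = algebraMap K L (algebraMap (𝓞 K) K x) at hr
  change (r + algebraMap K L (algebraMap (𝓞 K) K c)) ^ 2 = _ *
    (r + algebraMap K L (algebraMap (𝓞 K) K c)) + _
  simp only [map_mul, map_sub, map_ofNat]
  linear_combination hr

theorem exists_dvd_three {K L : Type} [Field K] [NumberField K] [Field L] [Algebra K L]
    [NumberField L] [IsPrincipalIdealRing (𝓞 K)] (hdeg : Module.finrank K L = 2)
    (hunr : Unr K L) :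
    ∃ (x : 𝓞 K) (r : L), x ∣ 3 ∧ r ^ 2 = algebraMap K L (algebraMap (𝓞 K) K x) ∧
      ∀ z : K, algebraMap K L z ≠ r := by
  obtain ⟨x, r, hx0, hsq, hr, hr'⟩ := exists_sqrt_squarefree (K := K) (L := L) hdeg
  refine ⟨x, r, ?_, hr, hr'⟩
  refine dvd_of_sqf x 3 hsq hx0 (OfNat.ofNat_ne_zero 3) ?_
  intro p hp hpx
  by_contra hp3
  refine eis_unr hunr p hp hp3 0 x (dvd_zero p) hpx (fun h => hp.not_isUnit (hsq p h)) r ?_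
  rw [hr]
  change _ = algebraMap K L (algebraMap (𝓞 K) K _) * _ + _
  simp

theorem norm_cases {K : Type} [Field K] [NumberField K] {ω : 𝓞 K} {t n : ℤ}
    (hq : QuadData K ω t n) (hD : t ^ 2 - 4 * n < 0) (x : 𝓞 K) (hx : x ∣ 3) :
    ∃ a b c e : ℤ, x = a + b * ω ∧ a * c - n * b * e = 3 ∧ a * e + b * c + t * b * e = 0 ∧
      (a ^ 2 + t * a * b + n * b ^ 2 = 1 ∨ a ^ 2 + t * a * b + n * b ^ 2 = 3 ∨
        c ^ 2 + t * c * e + n * e ^ 2 = 1) := by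
  obtain ⟨y, hy⟩ := hx
  obtain ⟨a, b, rfl⟩ := hq.2.1 x
  obtain ⟨c, e, rfl⟩ := hq.2.1 y
  have h3 : ((a : 𝓞 K) + b * ω) * (c + e * ω) = ((3 : ℤ) : 𝓞 K) + ((0 : ℤ) : 𝓞 K) * ω := by
    rw [← hy]; simp
  obtain ⟨h1, h2⟩ := hq.mul_coord h3
  refine ⟨a, b, c, e, rfl, h1, h2, ?_⟩
  have hN := hq.norm h3
  have hpos : ∀ u v : ℤ, 0 ≤ u ^ 2 + t * u * v + n * v ^ 2 := by
    intro u v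
    nlinarith [sq_nonneg (2 * u + t * v), sq_nonneg v]
  have p1 := hpos a b
  have p2 := hpos c e
  generalize a ^ 2 + t * a * b + n * b ^ 2 = N at *
  generalize c ^ 2 + t * c * e + n * e ^ 2 = M at *
  have hNM : N * M = 9 := by rw [hN]; ring
  have hNd : N ∣ 9 := ⟨M, hNM.symm⟩
  have hN9 : N ≤ 9 := Int.le_of_dvd (by norm_num) hNd
  interval_cases N <;> omega

theorem small_one {n a b : ℤ} (hn : 2 ≤ n) (h : a ^ 2 + 1 * a * b + n * b ^ 2 = 1) :
    b = 0 ∧ (a = 1 ∨ a = -1) := by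
  have hb : b = 0 := by
    by_contra hb
    have : 1 ≤ b ^ 2 := by
      have := Int.one_le_abs hb
      nlinarith [sq_abs b]
    nlinarith [sq_nonneg (2 * a + b)]
  subst hb
  refine ⟨rfl, ?_⟩
  have : a ^ 2 = 1 := by linarith
  exact sq_eq_one_iff.1 this

theorem small_three {n a b : ℤ} (hn : 2 ≤ n) (h : a ^ 2 + 1 * a * b + n * b ^ 2 = 3) :
    n = 3 ∧ (a = 0 ∧ b = 1 ∨ a = 0 ∧ b = -1 ∨ a = -1 ∧ b = 1 ∨ a = 1 ∧ b = -1) := by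
  have h4 : (2 * a + b) ^ 2 + (4 * n - 1) * b ^ 2 = 12 := by linear_combination 4 * h
  have hb1 : b < 2 := by nlinarith [sq_nonneg (2 * a + b)]
  have hb2 : -2 < b := by nlinarith [sq_nonneg (2 * a + b)]
  have ha1 : a < 3 := by nlinarith [sq_nonneg b]
  have ha2 : -3 < a := by nlinarith [sq_nonneg b]
  interval_cases b <;> interval_cases a <;> omega

theorem main_odd {K L : Type} [Field K] [NumberField K] [Field L] [Algebra K L]
    [NumberField L] [IsPrincipalIdealRing (𝓞 K)] (hdeg : Module.finrank K L = 2)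
    (hunr : Unr K L) {ω : 𝓞 K} {n : ℤ} (hq : QuadData K ω 1 n) (hn : 2 ≤ n)
    (hn2 : n % 2 = 1 ∨ n = 2) : ∃ ρ : L, ρ ^ 2 = -3 ∧ ∀ z : K, algebraMap K L z ≠ ρ := by
  obtain ⟨π, hπ, hπ2, hπ4⟩ : ∃ π : 𝓞 K, Prime π ∧ π ∣ 2 ∧ ¬ π * π ∣ 2 := by
    rcases hn2 with hn2 | rfl
    · refine ⟨2, hq.prime_two hn2, dvd_rfl, ?_⟩
      rintro ⟨y, hy⟩
      obtain ⟨c, e, rfl⟩ := hq.2.1 y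
      have := hq.coord (a := 2) (b := 0) (c := 4 * c) (e := 4 * e)
        (by push_cast; linear_combination hy)
      omega
    · refine ⟨ω, ?_, ⟨1 - ω, ?_⟩, ?_⟩
      · have := hq.prime_of_norm_two (a := 0) (b := 1) (by norm_num)
        simpa using this
      · have := hq.1
        push_cast at this
        linear_combination this
      · rintro ⟨y, hy⟩
        obtain ⟨c, e, rfl⟩ := hq.2.1 y
        have h1 := hq.1
        push_cast at h1
        have := hq.coord (a := 2) (b := 0) (c := -2 * c - 2 * e) (e := c - e)
          (by push_cast; linear_combination hy + (c + e * ω + e) * h1)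
        omega
  obtain ⟨x, r, hx3, hr, hr'⟩ := exists_dvd_three (K := K) (L := L) hdeg hunr
  obtain ⟨a, b, c, e, rfl, h1, h2, h⟩ := norm_cases hq (by omega) x hx3
  have pm : b = 0 ∧ (a = 1 ∨ a = -1 ∨ a = 3 ∨ a = -3) ∨
      a ^ 2 + 1 * a * b + n * b ^ 2 = 3 := by
    rcases h with h | h | h
    · have := small_one hn h
      omega
    · exact Or.inr h
    · obtain ⟨h0, h'⟩ := small_one hn h
      subst h0
      rcases h' with rfl | rfl <;> omega
  rcases pm with ⟨rfl, rfl | rfl | rfl | rfl⟩ | h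
  · exfalso
    have : r ^ 2 = 1 := by rw [hr]; simp
    rcases sq_eq_one_iff.1 this with rfl | rfl
    · exact hr' 1 (by simp)
    · exact hr' (-1) (by simp)
  · exfalso
    refine kill hunr π hπ hπ2 _ r hr 1 ?_ ?_
    · have : (((-1 : ℤ) : 𝓞 K) + ((0 : ℤ) : 𝓞 K) * ω) - 1 * 1 = -2 := by push_cast; ring
      rw [this, dvd_neg]; exact hπ2
    · have : (((-1 : ℤ) : 𝓞 K) + ((0 : ℤ) : 𝓞 K) * ω) - 1 * 1 = -2 := by push_cast; ring
      rw [this, dvd_neg]; exact hπ4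
  · exfalso
    refine kill hunr π hπ hπ2 _ r hr 1 ?_ ?_
    · have : (((3 : ℤ) : 𝓞 K) + ((0 : ℤ) : 𝓞 K) * ω) - 1 * 1 = 2 := by push_cast; ring
      rw [this]; exact hπ2
    · have : (((3 : ℤ) : 𝓞 K) + ((0 : ℤ) : 𝓞 K) * ω) - 1 * 1 = 2 := by push_cast; ring
      rw [this]; exact hπ4
  · exact ⟨r, by rw [hr]; simp only [map_add, map_mul, map_intCast]; push_cast; ring, hr'⟩
  · exfalso
    obtain ⟨h0, h'⟩ := small_three hn h
    subst h0
    have hp2 : Prime (2 : 𝓞 K) := hq.prime_two (by norm_num)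
    have ho := hq.1
    push_cast at ho
    have fin : ∀ (c : 𝓞 K) (f g : ℤ), ((a : 𝓞 K) + b * ω) - c * c = 2 * (f + g * ω) →
        (f % 2 = 1 ∨ g % 2 = 1) → False := by
      intro c f g he hfg
      refine kill hunr 2 hp2 dvd_rfl _ r hr c ⟨_, he⟩ ?_
      rw [he]
      rintro ⟨y, hy⟩
      obtain ⟨u, v, rfl⟩ := hq.2.1 y
      have := hq.coord (a := 2 * f) (b := 2 * g) (c := 4 * u) (e := 4 * v)
        (by push_cast; linear_combination hy)
      omega
    rcases h' with ⟨rfl, rfl⟩ | ⟨rfl, rfl⟩ | ⟨rfl, rfl⟩ | ⟨rfl, rfl⟩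
    · exact fin (ω + 1) 1 (-1) (by push_cast; linear_combination -ho) (by norm_num)
    · exact fin (ω + 1) 1 (-2) (by push_cast; linear_combination -ho) (by norm_num)
    · exact fin ω 1 0 (by push_cast; linear_combination -ho) (by norm_num)
    · exact fin ω 2 (-1) (by push_cast; linear_combination -ho) (by norm_num)

theorem main_two {K L : Type} [Field K] [NumberField K] [Field L] [Algebra K L]
    [NumberField L] [IsPrincipalIdealRing (𝓞 K)] (hdeg : Module.finrank K L = 2)
    (hunr : Unr K L) {ω : 𝓞 K} (hq : QuadData K ω 0 2) :
    ∃ ρ : L, ρ ^ 2 = -3 ∧ ∀ z : K, algebraMap K L z ≠ ρ := by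
  have hπ : Prime ω := by
    have := hq.prime_of_norm_two (a := 0) (b := 1) (by norm_num)
    simpa using this
  have ho := hq.1
  push_cast at ho
  have hπ2 : ω ∣ 2 := ⟨-ω, by linear_combination ho⟩
  have hnd : ∀ f g : ℤ, g % 2 = 1 → ¬ ω * ω ∣ (f : 𝓞 K) + g * ω := by
    rintro f g hg ⟨y, hy⟩
    obtain ⟨u, v, rfl⟩ := hq.2.1 y
    have := hq.coord (a := f) (b := g) (c := -2 * u) (e := -2 * v)
      (by push_cast; linear_combination hy + (u + v * ω) * ho)
    omega
  obtain ⟨x, r, hx3, hr, hr'⟩ := exists_dvd_three (K := K) (L := L) hdeg hunr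
  obtain ⟨a, b, c, e, rfl, h1, h2, h⟩ := norm_cases hq (by omega) x hx3
  have one : ∀ a b : ℤ, a ^ 2 + 0 * a * b + 2 * b ^ 2 = 1 → b = 0 ∧ (a = 1 ∨ a = -1) := by
    intro a b h
    have hb1 : b < 1 := by nlinarith [sq_nonneg a]
    have hb2 : -1 < b := by nlinarith [sq_nonneg a]
    have ha1 : a < 2 := by nlinarith [sq_nonneg b]
    have ha2 : -2 < a := by nlinarith [sq_nonneg b]
    interval_cases b; interval_cases a <;> omega
  have three : ∀ a b : ℤ, a ^ 2 + 0 * a * b + 2 * b ^ 2 = 3 → (b = 1 ∨ b = -1) ∧ (a = 1 ∨ a = -1) := by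
    intro a b h
    have hb1 : b < 2 := by nlinarith [sq_nonneg a]
    have hb2 : -2 < b := by nlinarith [sq_nonneg a]
    have ha1 : a < 2 := by nlinarith [sq_nonneg b]
    have ha2 : -2 < a := by nlinarith [sq_nonneg b]
    interval_cases b <;> interval_cases a <;> omega
  have pm : b = 0 ∧ (a = 1 ∨ a = -1 ∨ a = 3 ∨ a = -3) ∨
      (b = 1 ∨ b = -1) ∧ (a = 1 ∨ a = -1) := by
    rcases h with h | h | h
    · have := one _ _ h
      omega
    · exact Or.inr (three _ _ h)
    · obtain ⟨h0, h'⟩ := one _ _ h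
      subst h0
      rcases h' with rfl | rfl <;> omega
  -- the two special elements `(1 + ω + r) / ω`
  have hωL : algebraMap K L (algebraMap (𝓞 K) K ω) ≠ 0 := by
    simpa using hπ.ne_zero
  have hoL : algebraMap K L (algebraMap (𝓞 K) K ω) ^ 2 = -2 := by
    have := congrArg (fun z => algebraMap K L (algebraMap (𝓞 K) K z)) ho
    simp only [map_mul, map_sub, map_ofNat, map_zero] at this
    linear_combination this
  have special : ∀ f : ℤ, r ^ 2 = 4 * f - 1 → False := by
    intro f hf
    have hndf := hnd (-(2 * f)) 1 (by norm_num)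
    refine eis_unr hunr ω hπ (not_dvd_three hπ hπ2) (-(ω * (1 + ω)))
      (((-(2 * f) : ℤ) : 𝓞 K) + ((1 : ℤ) : 𝓞 K) * ω)
      ((Dvd.intro _ rfl).neg_right) ?_ hndf
      ((algebraMap K L (algebraMap (𝓞 K) K (1 + ω)) + r) / algebraMap K L (algebraMap (𝓞 K) K ω)) ?_
    · refine ⟨ω * f + 1, ?_⟩
      push_cast
      linear_combination -(f : 𝓞 K) * ho
    · change _ = algebraMap K L (algebraMap (𝓞 K) K _) * _ + algebraMap K L (algebraMap (𝓞 K) K _)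
      simp only [map_mul, map_add, map_neg, map_intCast, map_one]
      push_cast
      generalize algebraMap K L (algebraMap (𝓞 K) K ω) = w at *
      have hα : w * ((1 + w + r) / w) = 1 + w + r := mul_div_cancel₀ _ hωL
      generalize (1 + w + r) / w = α at *
      linear_combination (1 / 2) * α ^ 2 * hoL - 1 / 2 * (w * α + 1 + w + r) * hα +
        (1 + w) * hα + 1 / 2 * hoL - 1 / 2 * hf
  rcases pm with ⟨rfl, rfl | rfl | rfl | rfl⟩ | h
  · exfalso
    have : r ^ 2 = 1 := by rw [hr]; simp
    rcases sq_eq_one_iff.1 this with rfl | rfl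
    · exact hr' 1 (by simp)
    · exact hr' (-1) (by simp)
  · exact (special 0 (by rw [hr]; simp only [map_add, map_mul, map_intCast]; push_cast; ring)).elim
  · exact (special 1 (by rw [hr]; simp only [map_add, map_mul, map_intCast]; push_cast; ring)).elim
  · exact ⟨r, by rw [hr]; simp only [map_add, map_mul, map_intCast]; push_cast; ring, hr'⟩
  · exfalso
    have fin : ∀ (f g : ℤ), a - 1 = 2 * f → b = g → g % 2 = 1 → False := by
      rintro f g hf rfl hg
      have he : ((a : 𝓞 K) + b * ω) - 1 * 1 = ((2 * f : ℤ) : 𝓞 K) + b * ω := by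
        rw [← hf]; push_cast; ring
      refine kill hunr ω hπ hπ2 _ r hr 1 ?_ ?_
      · rw [he]
        refine ⟨-ω * f + b, ?_⟩
        push_cast
        linear_combination (f : 𝓞 K) * ho
      · rw [he]; exact hnd _ _ hg
    exact fin ((a - 1) / 2) b (by omega) rfl (by omega)

theorem main_one {K L : Type} [Field K] [NumberField K] [Field L] [Algebra K L]
    [NumberField L] [IsPrincipalIdealRing (𝓞 K)] (hdeg : Module.finrank K L = 2)
    (hunr : Unr K L) {ω : 𝓞 K} (hq : QuadData K ω 0 1) :
    ∃ ρ : L, ρ ^ 2 = -3 ∧ ∀ z : K, algebraMap K L z ≠ ρ := by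
  have hπ : Prime (1 + ω) := by
    have := hq.prime_of_norm_two (a := 1) (b := 1) (by norm_num)
    simpa using this
  have ho := hq.1
  push_cast at ho
  have hπ2 : 1 + ω ∣ 2 := ⟨1 - ω, by linear_combination ho⟩
  have hnd : ∀ f g : ℤ, g % 2 = 1 → ¬ (1 + ω) * (1 + ω) ∣ (f : 𝓞 K) + g * ω := by
    rintro f g hg ⟨y, hy⟩
    obtain ⟨u, v, rfl⟩ := hq.2.1 y
    have := hq.coord (a := f) (b := g) (c := -2 * v) (e := 2 * u)
      (by push_cast; linear_combination hy + (u + v * ω + 2 * v) * ho)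
    omega
  obtain ⟨x, r, hx3, hr, hr'⟩ := exists_dvd_three (K := K) (L := L) hdeg hunr
  obtain ⟨a, b, c, e, rfl, h1, h2, h⟩ := norm_cases hq (by omega) x hx3
  have one : ∀ a b : ℤ, a ^ 2 + 0 * a * b + 1 * b ^ 2 = 1 →
      b = 0 ∧ (a = 1 ∨ a = -1) ∨ a = 0 ∧ (b = 1 ∨ b = -1) := by
    intro a b h
    have hb1 : b < 2 := by nlinarith [sq_nonneg a]
    have hb2 : -2 < b := by nlinarith [sq_nonneg a]
    have ha1 : a < 2 := by nlinarith [sq_nonneg b]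
    have ha2 : -2 < a := by nlinarith [sq_nonneg b]
    interval_cases b <;> interval_cases a <;> omega
  have three : ∀ a b : ℤ, ¬ a ^ 2 + 0 * a * b + 1 * b ^ 2 = 3 := by
    intro a b h
    have hb1 : b < 2 := by nlinarith [sq_nonneg a]
    have hb2 : -2 < b := by nlinarith [sq_nonneg a]
    have ha1 : a < 2 := by nlinarith [sq_nonneg b]
    have ha2 : -2 < a := by nlinarith [sq_nonneg b]
    interval_cases b <;> interval_cases a <;> omega
  have pm : b = 0 ∧ (a = 1 ∨ a = -1 ∨ a = 3 ∨ a = -3) ∨ a = 0 ∧ b % 2 = 1 := by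
    rcases h with h | h | h
    · have := one _ _ h
      omega
    · exact absurd h (three _ _)
    · rcases one _ _ h with ⟨rfl, rfl | rfl⟩ | ⟨rfl, rfl | rfl⟩ <;> omega
  have hoL : algebraMap K L (algebraMap (𝓞 K) K ω) ^ 2 = -1 := by
    have := congrArg (fun z => algebraMap K L (algebraMap (𝓞 K) K z)) ho
    simp only [map_mul, map_sub, map_one, map_zero] at this
    linear_combination this
  rcases pm with ⟨rfl, rfl | rfl | rfl | rfl⟩ | ⟨rfl, hb⟩
  · exfalso
    have : r ^ 2 = 1 := by rw [hr]; simp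
    rcases sq_eq_one_iff.1 this with rfl | rfl
    · exact hr' 1 (by simp)
    · exact hr' (-1) (by simp)
  · exfalso
    have : r ^ 2 = algebraMap K L (algebraMap (𝓞 K) K ω) ^ 2 := by rw [hr, hoL]; simp
    rcases sq_eq_sq_iff_eq_or_eq_neg.1 this with rfl | rfl
    · exact hr' _ rfl
    · exact hr' (-algebraMap (𝓞 K) K ω) (by simp)
  · refine ⟨r * algebraMap K L (algebraMap (𝓞 K) K ω), ?_, ?_⟩
    · rw [mul_pow, hr, hoL]; simp only [map_add, map_mul, map_intCast]; push_cast; ring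
    · intro z hz
      apply hr' (-z * algebraMap (𝓞 K) K ω)
      rw [map_mul, map_neg, hz]
      linear_combination -r * hoL
  · exact ⟨r, by rw [hr]; simp only [map_add, map_mul, map_intCast]; push_cast; ring, hr'⟩
  · exfalso
    have he : (((0 : ℤ) : 𝓞 K) + b * ω) - 1 * 1 = ((-1 : ℤ) : 𝓞 K) + b * ω := by
      push_cast; ring
    refine kill hunr (1 + ω) hπ hπ2 _ r hr 1 ?_ ?_
    · rw [he]
      obtain ⟨f, rfl⟩ : ∃ f, b = 2 * f + 1 := ⟨b / 2, by omega⟩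
      refine ⟨f * (1 + ω) + ω, ?_⟩
      push_cast
      linear_combination -((f : 𝓞 K) + 1) * ho
    · rw [he]; exact hnd _ _ hb

theorem prime_check (p : ℕ) [NeZero p] (t n : ℤ)
    (h : ∀ a : ZMod p, a ^ 2 + (t : ZMod p) * a + (n : ZMod p) ≠ 0) (a : ℤ) :
    ¬ (p : ℤ) ∣ a ^ 2 + t * a + n := by
  intro hd
  rw [← ZMod.intCast_zmod_eq_zero_iff_dvd] at hd
  apply h (a : ZMod p)
  push_cast at hd
  exact hd

theorem odd_case {K L : Type} [Field K] [NumberField K] [Field L] [Algebra K L]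
    [NumberField L] (d : ℕ) (hp : d.Prime) (s : K) (hs : s ^ 2 = -(d : K))
    (hK : Module.finrank ℚ K = 2) (hdeg : Module.finrank K L = 2) (hunr : Unr K L)
    (n : ℤ) (h4 : (d : ℤ) + 1 = 4 * n) (hn : 2 ≤ n) (hn2 : n % 2 = 1 ∨ n = 2)
    (hchk : ∀ p : ℕ, p.Prime → 9 * p ^ 2 ≤ 4 * d → ∀ a : ℤ, ¬ (p : ℤ) ∣ a ^ 2 + 1 * a + n) :
    ∃ ρ : L, ρ ^ 2 = -3 ∧ ∀ z : K, algebraMap K L z ≠ ρ := by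
  obtain ⟨ω, hq⟩ := quadData_odd d hp.pos hp.prime.squarefree s hs hK n h4
  have := pid_of_quadData ω 1 n hq d hp.pos (by linarith) hchk
  exact main_odd hdeg hunr hq hn hn2

/-- For `d ∈ {1, 2, 7, 11, 19, 43, 67, 163}` and `K = ℚ(√-d)`, every quadratic extension
`L/K` unramified at every prime of `O_K` not dividing `3` is `K`-isomorphic to
`K(√-3) = K(ζ₃)`, the field obtained by adjoining a root of `x² + 3`. -/
theorem quadratic_extension_unramified_outside_three_is_K_zeta3
    (d : ℕ) (hd : d ∈ ({1, 2, 7, 11, 19, 43, 67, 163} : Finset ℕ))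
    (K : Type) [Field K] [NumberField K]
    (s : K) (hs : s ^ 2 = -(d : K)) (hK : Module.finrank ℚ K = 2)
    (L : Type) [Field L] [Algebra K L] [NumberField L]
    (hdeg : Module.finrank K L = 2)
    (hunr : ∀ P : Ideal (𝓞 K), P.IsPrime → P ≠ ⊥ → (3 : 𝓞 K) ∉ P →
      ∀ Q : Ideal (𝓞 L), Q.IsPrime → Q.comap (algebraMap (𝓞 K) (𝓞 L)) = P →
        Ideal.ramificationIdx' P Q = 1) :
    Nonempty (L ≃ₐ[K] AdjoinRoot ((X : K[X]) ^ 2 + 3)) := by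
  have hunr' : Unr K L := hunr
  suffices h : ∃ ρ : L, ρ ^ 2 = -3 ∧ ∀ z : K, algebraMap K L z ≠ ρ by
    obtain ⟨ρ, h1, h2⟩ := h
    exact iso_of_sqrt hdeg ρ h1 h2
  have c2 : ∀ n : ℤ, n % 2 = 1 → ∀ a : ℤ, ¬ ((2 : ℕ) : ℤ) ∣ a ^ 2 + 1 * a + n := by
    rintro n hn a ⟨k, hk⟩
    rcases Int.even_or_odd' a with ⟨m, rfl | rfl⟩
    · have : n = 2 * (k - 2 * m ^ 2 - m) := by push_cast at hk; linear_combination hk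
      omega
    · have : n = 2 * (k - 2 * m ^ 2 - 3 * m - 1) := by push_cast at hk; linear_combination hk
      omega
  simp only [Finset.mem_insert, Finset.mem_singleton] at hd
  rcases hd with rfl | rfl | rfl | rfl | rfl | rfl | rfl | rfl
  · obtain ⟨ω, hq⟩ := quadData_even 1 one_pos squarefree_one s hs hK (by norm_num)
    have := pid_of_quadData ω 0 _ hq 4 (by norm_num) (by norm_num) (fun p hp h => by
      have := hp.two_le
      nlinarith)
    exact main_one hdeg hunr' (by simpa using hq)
  · obtain ⟨ω, hq⟩ := quadData_even 2 two_pos Nat.prime_two.prime.squarefree s hs hK (by norm_num)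
    have := pid_of_quadData ω 0 _ hq 8 (by norm_num) (by norm_num) (fun p hp h => by
      have := hp.two_le
      nlinarith)
    exact main_two hdeg hunr' (by simpa using hq)
  · refine odd_case 7 (by norm_num) s hs hK hdeg hunr' 2 (by norm_num) (by norm_num) (by norm_num) ?_
    intro p hp h
    have := hp.two_le
    nlinarith
  · refine odd_case 11 (by norm_num) s hs hK hdeg hunr' 3 (by norm_num) (by norm_num) (by norm_num) ?_
    intro p hp h
    have h2 := hp.two_le
    have h3 : p < 3 := by nlinarith
    interval_cases p
    exact c2 _ (by norm_num)
  · refine odd_case 19 (by norm_num) s hs hK hdeg hunr' 5 (by norm_num) (by norm_num) (by norm_num) ?_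
    intro p hp h
    have h2 := hp.two_le
    have h3 : p < 3 := by nlinarith
    interval_cases p
    exact c2 _ (by norm_num)
  · refine odd_case 43 (by norm_num) s hs hK hdeg hunr' 11 (by norm_num) (by norm_num)
      (by norm_num) ?_
    intro p hp h
    have h2 := hp.two_le
    have h3 : p < 5 := by nlinarith
    interval_cases p
    · exact c2 _ (by norm_num)
    · exact prime_check 3 1 11 (by decide)
    · norm_num at hp
  · refine odd_case 67 (by norm_num) s hs hK hdeg hunr' 17 (by norm_num) (by norm_num)
      (by norm_num) ?_
    intro p hp h
    have h2 := hp.two_le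
    have h3 : p < 6 := by nlinarith
    interval_cases p
    · exact c2 _ (by norm_num)
    · exact prime_check 3 1 17 (by decide)
    · norm_num at hp
    · exact prime_check 5 1 17 (by decide)
  · refine odd_case 163 (by norm_num) s hs hK hdeg hunr' 41 (by norm_num) (by norm_num)
      (by norm_num) ?_
    intro p hp h
    have h2 := hp.two_le
    have h3 : p < 9 := by nlinarith
    interval_cases p
    · exact c2 _ (by norm_num)
    · exact prime_check 3 1 41 (by decide)
    · norm_num at hp
    · exact prime_check 5 1 41 (by decide)
    · norm_num at hp
    · exact prime_check 7 1 41 (by decide)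
    · norm_num at hp
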